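/- If λ ≠ 0 and λ ∉ ⋃_{j=1}^m Essran(p_j), then the operator T₂ − λE is invertible on H with bounded inverse, and the inverse is given by ((T₂ − λE)⁻¹ f)(x,y) = −(1/λ)·( f(x,y) − Σ_{j=1}^m (p_j(x)/(p_j(x) − λ))·(Q_j f)(x,y) ) for all f ∈ H. -/

import Mathlib

open MeasureTheory Complex

noncomputable section

/-- The measure on `ℝ` given by restricting Lebesgue measure to `[a,b]`. -/
abbrev muI (a b : ℝ) : MeasureTheory.Measure ℝ :=
  MeasureTheory.volume.restrict (Set.Icc a b)

/-- The essential range of a function `φ` with respect to a measure `μ` on `ℝ`. -/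
def Essran (μ : MeasureTheory.Measure ℝ) (φ : ℝ → ℝ) : Set ℝ :=
  {l : ℝ | ∀ ε > 0, 0 < μ {ξ : ℝ | l - ε < φ ξ ∧ φ ξ < l + ε}}

/-!
Let `P j` be multiplication by `p j`. Then `T = ∑ j, P j * Q j`, where the `Q j` are orthogonal
idempotents commuting with multiplication by any function of the first variable. If `l` is outside
the essential range of `p j`, then `p j / (p j - l)` is essentially bounded, and multiplication by
it is an operator `R j` with `P j * R j = P j + l • R j`. Hence `S = ∑ j, R j * Q j` satisfies
`T * S = S * T = T + l • S`, that is, `(T - l) * (1 - S) = (1 - S) * (T - l) = -l`.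

The essential range of a function is expressed as its set of cluster points along `ae μ`.
-/

section Algebra

section OrthogonalIdempotents

variable {A ι : Type*} [Semiring A] [Fintype ι] {e : ι → A}

lemma sum_mul_mul_sum_mul_of_orthogonalIdempotents (he : OrthogonalIdempotents e) (x : ι → A)
    {y : ι → A} (hcomm : ∀ i j, Commute (e i) (y j)) :
    (∑ i, x i * e i) * ∑ i, y i * e i = ∑ i, x i * y i * e i := by
  classical
  rw [Finset.sum_mul_sum]
  refine Finset.sum_congr rfl fun i _ => ?_
  have hterm (j : ι) : x i * e i * (y j * e j) = if i = j then x i * y i * e i else 0 := by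
    rw [mul_assoc, ← mul_assoc (e i), (hcomm i j).eq, mul_assoc (y j), he.mul_eq]
    split_ifs with hij
    · rw [hij, mul_assoc]
    · rw [mul_zero, mul_zero]
  simp only [hterm, Finset.sum_ite_eq, Finset.mem_univ, if_true]

lemma sum_mul_mul_sum_mul_eq_add_smul {R : Type*} [Semiring R] [Module R A]
    [IsScalarTower R A A] (he : OrthogonalIdempotents e) {x y u v : ι → A} {c : R}
    (hcomm : ∀ i j, Commute (e i) (y j)) (hxy : ∀ i, x i * y i = u i + c • v i) :
    (∑ i, x i * e i) * ∑ i, y i * e i = ∑ i, u i * e i + c • ∑ i, v i * e i := by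
  rw [sum_mul_mul_sum_mul_of_orthogonalIdempotents he x hcomm]
  simp only [hxy, add_mul, Finset.sum_add_distrib, Finset.smul_sum, smul_mul_assoc]

end OrthogonalIdempotents

variable {𝕜 A : Type*} [Field 𝕜] [Ring A] [Algebra 𝕜 A] {l : 𝕜} {t s : A}

lemma sub_smul_one_mul_neg_one_div_smul_one_sub (hl : l ≠ 0) (h : t * s = t + l • s) :
    (t - l • 1) * (-(1 / l) • (1 - s)) = 1 := by
  have hmul : (t - l • 1) * (1 - s) = -l • 1 := by
    rw [mul_sub, mul_one, sub_mul, h, smul_one_mul, neg_smul]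
    abel
  rw [mul_smul_comm, hmul, smul_smul, neg_mul_neg, one_div_mul_cancel hl, one_smul]

lemma neg_one_div_smul_one_sub_mul_sub_smul_one (hl : l ≠ 0) (h : s * t = t + l • s) :
    (-(1 / l) • (1 - s)) * (t - l • 1) = 1 := by
  have hmul : (1 - s) * (t - l • 1) = -l • 1 := by
    rw [sub_mul, one_mul, mul_sub, h, mul_smul_one, neg_smul]
    abel
  rw [smul_mul_assoc, hmul, smul_smul, neg_mul_neg, one_div_mul_cancel hl, one_smul]

end Algebra

section EssentialRange

lemma not_mapClusterPt_iff_exists_pos_eventually_le_dist {X E : Type*} [PseudoMetricSpace E]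
    {F : Filter X} {g : X → E} {l : E} :
    ¬MapClusterPt l F g ↔ ∃ ε > 0, ∀ᶠ x in F, ε ≤ dist (g x) l := by
  simp [Metric.nhds_basis_ball.mapClusterPt_iff_frequently]

lemma mem_Essran_iff_mapClusterPt {μ : Measure ℝ} {g : ℝ → ℝ} {l : ℝ} :
    l ∈ Essran μ g ↔ MapClusterPt l (ae μ) g := by
  simp only [Metric.nhds_basis_ball.mapClusterPt_iff_frequently, Real.ball_eq_Ioo,
    frequently_ae_iff, Essran, Set.mem_ofPred_eq, Set.mem_Ioo, pos_iff_ne_zero]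

lemma mapClusterPt_ofReal_iff {X : Type*} {F : Filter X} {g : X → ℝ} {l : ℝ} :
    MapClusterPt (l : ℂ) F (fun x => (g x : ℂ)) ↔ MapClusterPt l F g :=
  isometry_ofReal.isEmbedding.isInducing.mapClusterPt_iff (l := F.map g)

variable {X 𝕜 : Type*} [MeasurableSpace X] {μ : Measure X} [RCLike 𝕜] {g : X → 𝕜} {l : 𝕜}

lemma ae_sub_ne_zero_of_not_mapClusterPt (hl : ¬MapClusterPt l (ae μ) g) :
    ∀ᵐ x ∂μ, g x - l ≠ 0 := by
  obtain ⟨ε, hε, hgap⟩ := not_mapClusterPt_iff_exists_pos_eventually_le_dist.1 hl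
  filter_upwards [hgap] with x hx
  exact sub_ne_zero.2 (dist_pos.1 (hε.trans_le hx))

lemma memLp_top_div_sub (hg : MemLp g ⊤ μ) (hl : ¬MapClusterPt l (ae μ) g) :
    MemLp (fun x => g x / (g x - l)) ⊤ μ := by
  obtain ⟨ε, hε, hgap⟩ := not_mapClusterPt_iff_exists_pos_eventually_le_dist.1 hl
  have hinv : MemLp (fun x => (g x - l)⁻¹) ⊤ μ := by
    refine memLp_top_of_bound (hg.1.sub aestronglyMeasurable_const).inv₀ ε⁻¹ ?_
    filter_upwards [hgap] with x hx
    rw [norm_inv, ← dist_eq_norm]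
    exact inv_anti₀ hε hx
  simpa only [div_eq_mul_inv] using hinv.mul' hg

end EssentialRange

section Product

lemma memLp_top_comp_quasiMeasurePreserving {Z X E : Type*} [MeasurableSpace Z]
    [MeasurableSpace X] [NormedAddCommGroup E] {κ : Measure Z} {μ : Measure X} {g : X → E}
    {π : Z → X} (hg : MemLp g ⊤ μ) (hπ : Measure.QuasiMeasurePreserving π κ μ) :
    MemLp (g ∘ π) ⊤ κ :=
  memLp_top_of_bound (hg.1.comp_quasiMeasurePreserving hπ) (lpNorm g ⊤ μ)
    (hπ.ae (ae_le_lpNorm_exponent_top hg))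

variable {X Y : Type*} [MeasurableSpace X] [MeasurableSpace Y] {μ : Measure X} {ν : Measure Y}

lemma ae_prod_of_ae_fst {P : X → Prop} (h : ∀ᵐ x ∂μ, P x) : ∀ᵐ z ∂μ.prod ν, P z.1 :=
  Measure.quasiMeasurePreserving_fst.ae h

variable [SFinite ν]

lemma ae_prod_ae_of_ae_prod {P : X × Y → Prop} (h : ∀ᵐ z ∂μ.prod ν, P z) :
    ∀ᵐ z ∂μ.prod ν, ∀ᵐ t ∂ν, P (z.1, t) :=
  ae_prod_of_ae_fst (Measure.ae_ae_of_ae_prod h)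

lemma ae_memLp_prodMk_left {E : Type*} [NormedAddCommGroup E] {r : ENNReal} {f : X × Y → E}
    (hf : MemLp f r (μ.prod ν)) : ∀ᵐ x ∂μ, MemLp (fun t => f (x, t)) r ν := by
  rcases eq_or_ne r 0 with rfl | hr_zero
  · simpa only [memLp_zero_iff_aestronglyMeasurable] using hf.1.prodMk_left
  rcases eq_or_ne r ⊤ with rfl | hr_top
  · filter_upwards [hf.1.prodMk_left, Measure.ae_ae_of_ae_prod (ae_le_lpNorm_exponent_top hf)]
      with x hmeas hbound
    exact memLp_top_of_bound hmeas _ hbound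
  have hpow : AEMeasurable (fun z => ‖f z‖ₑ ^ r.toReal) (μ.prod ν) := hf.1.enorm.pow_const _
  have hfin : ∫⁻ z, ‖f z‖ₑ ^ r.toReal ∂μ.prod ν < ⊤ :=
    lintegral_rpow_enorm_lt_top_of_eLpNorm_lt_top hr_zero hr_top hf.2
  rw [lintegral_prod _ hpow] at hfin
  filter_upwards [hf.1.prodMk_left, ae_lt_top' hpow.lintegral_prod_right' hfin.ne]
    with x hmeas hlt
  exact ⟨hmeas, (eLpNorm_lt_top_iff_lintegral_rpow_enorm_lt_top hr_zero hr_top).2 hlt⟩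

end Product

section Operators

variable {X Y 𝕜 : Type*} [MeasurableSpace X] [MeasurableSpace Y] {μ : Measure X} {ν : Measure Y}
  [RCLike 𝕜] {r : ENNReal} [Fact (1 ≤ r)]

variable (ν r) in
/-- Multiplication by an essentially bounded function of the first variable, as an operator on
`L^r` of the product. -/
def fstMul {g : X → 𝕜} (hg : MemLp g ⊤ μ) :
    Lp 𝕜 r (μ.prod ν) →L[𝕜] Lp 𝕜 r (μ.prod ν) :=
  (ContinuousLinearMap.mul 𝕜 𝕜).holderL (μ.prod ν) ⊤ r r
    (memLp_top_comp_quasiMeasurePreserving hg Measure.quasiMeasurePreserving_fst).toLp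

lemma coeFn_fstMul {g : X → 𝕜} (hg : MemLp g ⊤ μ) (f : Lp 𝕜 r (μ.prod ν)) :
    fstMul ν r hg f =ᵐ[μ.prod ν] fun z => g z.1 * f z := by
  have hfst : MemLp (g ∘ Prod.fst) ⊤ (μ.prod ν) :=
    memLp_top_comp_quasiMeasurePreserving hg Measure.quasiMeasurePreserving_fst
  filter_upwards [(ContinuousLinearMap.mul 𝕜 𝕜).coeFn_holder (r := r) hfst.toLp f,
    hfst.coeFn_toLp] with z hmul hgz
  exact hmul.trans (by rw [hgz, ContinuousLinearMap.mul_apply', Function.comp_apply])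

lemma commute_fstMul_fstMul {g h : X → 𝕜} (hg : MemLp g ⊤ μ) (hh : MemLp h ⊤ μ) :
    Commute (fstMul ν r hg) (fstMul ν r hh) := by
  ext1 f
  refine Lp.ext ?_
  filter_upwards [coeFn_fstMul hg (fstMul ν r hh f), coeFn_fstMul hh f,
    coeFn_fstMul hh (fstMul ν r hg f), coeFn_fstMul hg f] with z hghf hhf hhgf hgf
  simp only [mul_apply_eq_comp, hghf, hhf, hhgf, hgf]
  exact mul_left_comm _ _ _

lemma fstMul_mul_fstMul_div_sub {g : X → 𝕜} {l : 𝕜} (hg : MemLp g ⊤ μ)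
    (hl : ¬MapClusterPt l (ae μ) g) :
    fstMul ν r hg * fstMul ν r (memLp_top_div_sub hg hl) =
      fstMul ν r hg + l • fstMul ν r (memLp_top_div_sub hg hl) := by
  set R := fstMul ν r (memLp_top_div_sub hg hl)
  ext1 f
  refine Lp.ext ?_
  filter_upwards [coeFn_fstMul hg (R f), coeFn_fstMul hg f,
    coeFn_fstMul (memLp_top_div_sub hg hl) f, Lp.coeFn_add (fstMul ν r hg f) (l • R f),
    Lp.coeFn_smul l (R f), ae_prod_of_ae_fst (ae_sub_ne_zero_of_not_mapClusterPt hl)]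
    with z hgR hgf hRf hadd hsmul hne
  rw [mul_apply_eq_comp, add_apply, smul_apply, hadd, Pi.add_apply, hsmul, Pi.smul_apply, hgR,
    hgf, hRf, smul_eq_mul]
  field_simp
  ring

/-- `T` is the partial integral operator in the second variable with kernel `k`, where `k x y t`
is the weight of the value at `(x, t)` in the value of the image at `(x, y)`. The Bochner integral
is `0` where the integrand fails to be integrable. -/
def IsPartialIntegralOperator (k : X → Y → Y → 𝕜)
    (T : Lp 𝕜 r (μ.prod ν) →L[𝕜] Lp 𝕜 r (μ.prod ν)) : Prop :=
  ∀ f : Lp 𝕜 r (μ.prod ν), ∀ᵐ z ∂μ.prod ν, T f z = ∫ t, k z.1 z.2 t * f (z.1, t) ∂ν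

namespace IsPartialIntegralOperator

variable {k : X → Y → Y → 𝕜} {T T' : Lp 𝕜 r (μ.prod ν) →L[𝕜] Lp 𝕜 r (μ.prod ν)}

lemma unique (hT : IsPartialIntegralOperator k T) (hT' : IsPartialIntegralOperator k T') :
    T = T' := by
  ext1 f
  refine Lp.ext ?_
  filter_upwards [hT f, hT' f] with z hz hz'
  rw [hz, hz']

lemma zero : IsPartialIntegralOperator (fun _ _ _ => 0)
    (0 : Lp 𝕜 r (μ.prod ν) →L[𝕜] Lp 𝕜 r (μ.prod ν)) := by
  intro f
  filter_upwards [Lp.coeFn_zero 𝕜 r (μ.prod ν)] with z hz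
  simpa only [zero_apply, Pi.zero_apply, zero_mul, integral_zero] using hz

lemma sum {ι : Type*} [Fintype ι] {k : ι → X → Y → Y → 𝕜}
    {T : ι → Lp 𝕜 r (μ.prod ν) →L[𝕜] Lp 𝕜 r (μ.prod ν)}
    (hint : ∀ i (f : Lp 𝕜 r (μ.prod ν)), ∀ᵐ z ∂μ.prod ν,
      Integrable (fun t => k i z.1 z.2 t * f (z.1, t)) ν)
    (hT : ∀ i, IsPartialIntegralOperator (k i) (T i)) :
    IsPartialIntegralOperator (fun x y t => ∑ i, k i x y t) (∑ i, T i) := by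
  intro f
  filter_upwards [Lp.coeFn_fun_finsetSum Finset.univ fun i => T i f,
    ae_all_iff.2 fun i => hT i f, ae_all_iff.2 fun i => hint i f] with z hsum hTf hint
  simp only [sum_apply, hsum, hTf, Finset.sum_mul]
  rw [integral_finsetSum _ fun i _ => hint i]

lemma fstMul_mul {g : X → 𝕜} (hg : MemLp g ⊤ μ) (hT : IsPartialIntegralOperator k T) :
    IsPartialIntegralOperator (fun x y t => g x * k x y t) (fstMul ν r hg * T) := by
  intro f
  filter_upwards [coeFn_fstMul hg (T f), hT f] with z hgz hz
  simp only [mul_apply_eq_comp, hgz, hz, mul_assoc, integral_const_mul]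

lemma mul_fstMul [SFinite ν] {g : X → 𝕜} (hg : MemLp g ⊤ μ)
    (hT : IsPartialIntegralOperator k T) :
    IsPartialIntegralOperator (fun x y t => g x * k x y t) (T * fstMul ν r hg) := by
  intro f
  filter_upwards [hT (fstMul ν r hg f), ae_prod_ae_of_ae_prod (coeFn_fstMul hg f)] with z hz hgz
  rw [mul_apply_eq_comp, hz]
  refine integral_congr_ae ?_
  filter_upwards [hgz] with t ht
  rw [ht]
  ring

lemma commute_fstMul [SFinite ν] {g : X → 𝕜} (hg : MemLp g ⊤ μ)
    (hT : IsPartialIntegralOperator k T) : Commute T (fstMul ν r hg) :=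
  (hT.mul_fstMul hg).unique (hT.fstMul_mul hg)

lemma rankOne_iff {φ η : Y → 𝕜} :
    IsPartialIntegralOperator (fun _ y t => φ y * η t) T ↔
      ∀ f : Lp 𝕜 r (μ.prod ν), ∀ᵐ z ∂μ.prod ν, T f z = φ z.2 * ∫ t, η t * f (z.1, t) ∂ν := by
  simp only [IsPartialIntegralOperator, mul_assoc, integral_const_mul]

lemma rankOne_mul_rankOne [SFinite ν] {φ η φ' η' : Y → 𝕜}
    (hT : IsPartialIntegralOperator (fun _ y t => φ y * η t) T)
    (hT' : IsPartialIntegralOperator (fun _ y t => φ' y * η' t) T') :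
    IsPartialIntegralOperator (fun _ y t => (∫ u, η u * φ' u ∂ν) * (φ y * η' t)) (T * T') := by
  rw [rankOne_iff] at hT hT'
  intro f
  filter_upwards [hT (T' f), ae_prod_ae_of_ae_prod (hT' f)] with z hz hfiber
  have hcoeff : ∫ t, η t * T' f (z.1, t) ∂ν =
      (∫ u, η u * φ' u ∂ν) * ∫ t, η' t * f (z.1, t) ∂ν := by
    rw [← integral_mul_const]
    refine integral_congr_ae ?_
    filter_upwards [hfiber] with t ht
    rw [ht, mul_assoc]
  simp only [mul_apply_eq_comp, hz, hcoeff, mul_assoc, integral_const_mul]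
  exact mul_left_comm _ _ _

end IsPartialIntegralOperator

variable [SFinite ν] {ι : Type*} {φ η : ι → Y → 𝕜}
  {Q : ι → Lp 𝕜 r (μ.prod ν) →L[𝕜] Lp 𝕜 r (μ.prod ν)}

lemma orthogonalIdempotents_of_biorthogonal [DecidableEq ι]
    (hbi : ∀ i j, ∫ y, η i y * φ j y ∂ν = if i = j then 1 else 0)
    (hQ : ∀ i, IsPartialIntegralOperator (fun _ y t => φ i y * η i t) (Q i)) :
    OrthogonalIdempotents Q where
  idem i := by
    have hmul := (hQ i).rankOne_mul_rankOne (hQ i)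
    simp only [hbi, if_true, one_mul] at hmul
    exact hmul.unique (hQ i)
  ortho i j hij := by
    have hmul := (hQ i).rankOne_mul_rankOne (hQ j)
    simp only [hbi, if_neg hij, zero_mul] at hmul
    exact hmul.unique .zero

lemma IsPartialIntegralOperator.eq_sum_fstMul_mul [Fintype ι] {s : ENNReal}
    [ENNReal.HolderConjugate s r] {p : ι → X → 𝕜} (hp : ∀ i, MemLp (p i) ⊤ μ)
    (hη : ∀ i, MemLp (η i) s ν)
    (hQ : ∀ i, IsPartialIntegralOperator (fun _ y t => φ i y * η i t) (Q i))
    {T : Lp 𝕜 r (μ.prod ν) →L[𝕜] Lp 𝕜 r (μ.prod ν)}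
    (hT : IsPartialIntegralOperator (fun x y t => ∑ i, p i x * φ i y * η i t) T) :
    T = ∑ i, fstMul ν r (hp i) * Q i := by
  simp only [mul_assoc] at hT
  refine hT.unique (.sum (fun i f => ?_) fun i => (hQ i).fstMul_mul (hp i))
  filter_upwards [ae_prod_of_ae_fst (ae_memLp_prodMk_left (Lp.memLp f))] with z hz
  have hpair : Integrable (fun t => η i t * f (z.1, t)) ν := (hη i).integrable_mul hz
  simpa only [mul_assoc] using hpair.const_mul (p i z.1 * φ i z.2)

end Operators

theorem statement6_general {X Y ι 𝕜 : Type*} [MeasurableSpace X] [MeasurableSpace Y]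
    {μ : Measure X} {ν : Measure Y} [SFinite ν] [RCLike 𝕜] [Fintype ι] [DecidableEq ι]
    {r s : ENNReal} [Fact (1 ≤ r)] [ENNReal.HolderConjugate s r]
    {p : ι → X → 𝕜} (hp : ∀ i, MemLp (p i) ⊤ μ)
    {φ η : ι → Y → 𝕜} (hη : ∀ i, MemLp (η i) s ν)
    (hbi : ∀ i j, ∫ y, η i y * φ j y ∂ν = if i = j then 1 else 0)
    {T : Lp 𝕜 r (μ.prod ν) →L[𝕜] Lp 𝕜 r (μ.prod ν)}
    (hT : IsPartialIntegralOperator (fun x y t => ∑ i, p i x * φ i y * η i t) T)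
    {Q : ι → Lp 𝕜 r (μ.prod ν) →L[𝕜] Lp 𝕜 r (μ.prod ν)}
    (hQ : ∀ i, IsPartialIntegralOperator (fun _ y t => φ i y * η i t) (Q i))
    {l : 𝕜} (hl_zero : l ≠ 0) (hl : ∀ i, ¬MapClusterPt l (ae μ) (p i)) :
    ∃ B : Lp 𝕜 r (μ.prod ν) →L[𝕜] Lp 𝕜 r (μ.prod ν),
      (T - l • 1) * B = 1 ∧ B * (T - l • 1) = 1 ∧
      ∀ f : Lp 𝕜 r (μ.prod ν), ∀ᵐ z ∂μ.prod ν,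
        B f z = -(1 / l) * (f z - ∑ i, p i z.1 / (p i z.1 - l) * Q i f z) := by
  have hidem := orthogonalIdempotents_of_biorthogonal hbi hQ
  let P i := fstMul ν r (hp i)
  let R i := fstMul ν r (memLp_top_div_sub (hp i) (hl i))
  let S := ∑ i, R i * Q i
  have hTsum : T = ∑ i, P i * Q i := hT.eq_sum_fstMul_mul hp hη hQ
  have hPR (i : ι) : P i * R i = P i + l • R i := fstMul_mul_fstMul_div_sub (hp i) (hl i)
  have hRP (i : ι) : R i * P i = P i + l • R i := (commute_fstMul_fstMul _ _).eq.trans (hPR i)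
  have hTS : T * S = T + l • S :=
    hTsum ▸ sum_mul_mul_sum_mul_eq_add_smul hidem (fun i j => (hQ i).commute_fstMul _) hPR
  have hST : S * T = T + l • S :=
    hTsum ▸ sum_mul_mul_sum_mul_eq_add_smul hidem (fun i j => (hQ i).commute_fstMul _) hRP
  refine ⟨-(1 / l) • (1 - S), sub_smul_one_mul_neg_one_div_smul_one_sub hl_zero hTS,
    neg_one_div_smul_one_sub_mul_sub_smul_one hl_zero hST, fun f => ?_⟩
  have hSf : S f = ∑ i, R i (Q i f) := by simp only [S, sum_apply, mul_apply_eq_comp]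
  filter_upwards [Lp.coeFn_smul (-(1 / l)) (f - S f), Lp.coeFn_sub f (S f),
    Lp.coeFn_fun_finsetSum Finset.univ fun i => R i (Q i f),
    ae_all_iff.2 fun i => coeFn_fstMul (memLp_top_div_sub (hp i) (hl i)) (Q i f)]
    with z hsmul hsub hsum hRQ
  calc (-(1 / l) • (f - S f) : Lp 𝕜 r (μ.prod ν)) z = -(1 / l) * (f z - S f z) := by
        rw [hsmul, Pi.smul_apply, hsub, Pi.sub_apply, smul_eq_mul]
    _ = -(1 / l) * (f z - ∑ i, p i z.1 / (p i z.1 - l) * Q i f z) := by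
        rw [hSf, hsum]
        simp only [R, hRQ]

theorem statement6
    (a b c d : ℝ) (hab : a < b) (hcd : c < d)
    (m : ℕ) (hm : 1 ≤ m)
    (ψ : Fin m → ℝ → ℂ)
    (hψL2 : ∀ j, MemLp (ψ j) 2 (muI c d))
    (hψON : ∀ i j, ∫ y, star (ψ i y) * ψ j y ∂(muI c d) = if i = j then 1 else 0)
    (p : Fin m → ℝ → ℝ)
    (hpmeas : ∀ j, Measurable (p j))
    (hpbdd : ∀ j, ∃ C : ℝ, ∀ᵐ x ∂(muI a b), |p j x| ≤ C)
    (T2 : Lp ℂ 2 ((muI a b).prod (muI c d)) →L[ℂ] Lp ℂ 2 ((muI a b).prod (muI c d)))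
    (hT2sa : IsSelfAdjoint T2)
    (hT2 : ∀ f : Lp ℂ 2 ((muI a b).prod (muI c d)),
      ∀ᵐ z ∂((muI a b).prod (muI c d)),
        T2 f z = ∫ t, (∑ j, (p j z.1 : ℂ) * ψ j z.2 * star (ψ j t)) * f (z.1, t) ∂(muI c d))
    -- the orthogonal projections `Q j`
    (Q : Fin m → (Lp ℂ 2 ((muI a b).prod (muI c d)) →L[ℂ] Lp ℂ 2 ((muI a b).prod (muI c d))))
    (hQ : ∀ j, ∀ f : Lp ℂ 2 ((muI a b).prod (muI c d)),
      ∀ᵐ z ∂((muI a b).prod (muI c d)),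
        Q j f z = ψ j z.2 * ∫ t, star (ψ j t) * f (z.1, t) ∂(muI c d))
    (lam : ℝ) (hlam0 : lam ≠ 0) (hlam : lam ∉ ⋃ j, Essran (muI a b) (p j)) :
    ∃ B : Lp ℂ 2 ((muI a b).prod (muI c d)) →L[ℂ] Lp ℂ 2 ((muI a b).prod (muI c d)),
      (T2 - (lam : ℂ) • 1) * B = 1 ∧ B * (T2 - (lam : ℂ) • 1) = 1 ∧
      ∀ f : Lp ℂ 2 ((muI a b).prod (muI c d)),
        ∀ᵐ z ∂((muI a b).prod (muI c d)),
          B f z = -(1 / (lam : ℂ)) *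
            (f z - ∑ j, ((p j z.1 : ℂ) / ((p j z.1 : ℂ) - (lam : ℂ))) * Q j f z) := by
  have hp (j : Fin m) : MemLp (fun x => (p j x : ℂ)) ⊤ (muI a b) :=
    let ⟨C, hC⟩ := hpbdd j
    (memLp_top_of_bound (hpmeas j).aestronglyMeasurable C hC).ofReal
  have hlam_p (j : Fin m) : ¬MapClusterPt (lam : ℂ) (ae (muI a b)) (fun x => (p j x : ℂ)) :=
    fun h => hlam <| Set.mem_iUnion_of_mem j <|
      mem_Essran_iff_mapClusterPt.2 <| mapClusterPt_ofReal_iff.1 h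
  exact statement6_general hp (fun j => (hψL2 j).star) hψON hT2
    (fun j => IsPartialIntegralOperator.rankOne_iff.2 (hQ j)) (ofReal_ne_zero.2 hlam0) hlam_p
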